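/- The two 10-vertex graphs from the counterexample are not isomorphic: there is no bijection P : [10] → [10] preserving both the edge relation and the coloring. Here G₁ has edges from vertex 1 to each of 2,3,4,5; edges (2,6),(2,7),(3,7),(3,8),(4,8),(4,9),(5,9),(5,6); and edges from each of 6,7,8,9 to 10. G₂ has the same edges except the middle layer is (2,6),(2,7),(3,6),(3,7),(4,8),(4,9),(5,8),(5,9). The coloring assigns color a to vertices 2,3,4,5, color b to vertices 6,7,8,9, and distinct colors to vertices 1 and 10. -/

import Mathlib

/-- Edges of the first counterexample graph (0-based vertex names: paper's
vertex `v` is `v - 1` here).  Middle layer forms a single 8-cycle. -/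
def L1 : List (ℕ × ℕ) :=
  [(0,1),(0,2),(0,3),(0,4),
   (1,5),(1,6),(2,6),(2,7),(3,7),(3,8),(4,8),(4,5),
   (5,9),(6,9),(7,9),(8,9)]

/-- Edges of the second counterexample graph: middle layer forms two
complete bipartite components. -/
def L2 : List (ℕ × ℕ) :=
  [(0,1),(0,2),(0,3),(0,4),
   (1,5),(1,6),(2,5),(2,6),(3,7),(3,8),(4,7),(4,8),
   (5,9),(6,9),(7,9),(8,9)]

def E1 : Fin 10 → Fin 10 → Bool := fun i j => decide ((i.val, j.val) ∈ L1)
def E2 : Fin 10 → Fin 10 → Bool := fun i j => decide ((i.val, j.val) ∈ L2)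

/-- Coloring: vertex 1 gets color 0, vertex 10 gets color 1,
vertices 2–5 get color 2, vertices 6–9 get color 3. -/
def c10 : Fin 10 → ℕ := fun i =>
  if i.val = 0 then 0 else if i.val = 9 then 1 else if i.val < 5 then 2 else 3

/-- In the second graph, two color-2 vertices with a common color-3 out-neighbour
have the same color-3 out-neighbours. -/
theorem E2_rect : ∀ x, c10 x = 2 → ∀ u, c10 u = 3 → E2 x u = true →
    ∀ v, c10 v = 3 → E2 x v = true → ∀ y, c10 y = 2 → E2 y v = true → E2 y u = true := by
  decide

theorem counterexample_not_isomorphic :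
    ¬ ∃ P : Equiv (Fin 10) (Fin 10),
        (∀ i j, E1 i j ↔ E2 (P i) (P j)) ∧ (∀ i, c10 i = c10 (P i)) := by
  rintro ⟨P, hE, hc⟩
  have h := E2_rect (P 1) ((hc 1).symm.trans (by decide)) (P 5) ((hc 5).symm.trans (by decide))
    ((hE 1 5).1 (by decide)) (P 6) ((hc 6).symm.trans (by decide))
    ((hE 1 6).1 (by decide)) (P 2) ((hc 2).symm.trans (by decide)) ((hE 2 6).1 (by decide))
  exact absurd ((hE 2 5).2 h) (by decide)
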